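/- The modified mean-field vector field l̂ on (ℝ^{ℤ₊})^M defined via truncation θ(x) = max(0, min(x,1)) — namely l̂_0^{(j)}(u) = 0 and l̂_k^{(j)}(u) = (λ/γⱼ)[θ(u_{k−1}^{(j)})^{dⱼ} − θ(u_k^{(j)})^{dⱼ}]₊·∏_{i<j}θ(u_{k−1}^{(i)})^{d_i}·∏_{i>j}θ(u_k^{(i)})^{d_i} − μCⱼ[θ(u_k^{(j)}) − θ(u_{k+1}^{(j)})]₊ — is Lipschitz with respect to the norm ‖u‖ = sup_j sup_k |u_k^{(j)}|/(k+1): there is a constant K₂ = 4Mλ(max_j dⱼ)/(min_j γⱼ) + 3μ(max_j Cⱼ) such that ‖l̂(u) − l̂(w)‖ ≤ K₂‖u − w‖ for all u, w. -/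

import Mathlib

open Finset

/-- Truncation `θ(x) = max 0 (min x 1)`. -/
noncomputable def trunc (x : ℝ) : ℝ := max 0 (min x 1)

/-- The modified (truncated) Scheme-1 mean-field vector field `l̂` on `(ℝ^ℤ₊)^M`. -/
noncomputable def meanFieldLhat {M : ℕ} (lam mu : ℝ) (γ C : Fin M → ℝ)
    (d : Fin M → ℕ) (u : Fin M → ℕ → ℝ) (j : Fin M) : ℕ → ℝ
  | 0 => 0
  | (k + 1) =>
      (lam / γ j) * max 0 ((trunc (u j k)) ^ (d j) - (trunc (u j (k + 1))) ^ (d j)) *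
          (∏ i ∈ univ.filter (fun i => i < j), (trunc (u i k)) ^ (d i)) *
          (∏ i ∈ univ.filter (fun i => j < i), (trunc (u i (k + 1))) ^ (d i)) -
        mu * C j * max 0 (trunc (u j (k + 1)) - trunc (u j (k + 2)))

theorem trunc_mem (x : ℝ) : 0 ≤ trunc x ∧ trunc x ≤ 1 := by
  unfold trunc
  exact ⟨le_max_left _ _, max_le zero_le_one (min_le_right _ _)⟩

theorem max_zero_sub_le (x y : ℝ) : |max 0 x - max 0 y| ≤ |x - y| := by
  have h := abs_max_sub_max_le_max 0 x 0 y
  simpa using h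

theorem trunc_sub_le (x y : ℝ) : |trunc x - trunc y| ≤ |x - y| := by
  unfold trunc
  refine (max_zero_sub_le _ _).trans ?_
  have h := abs_min_sub_min_le_max x 1 y 1
  simpa using h

theorem mul_diff_le {a a' p p' : ℝ} (ha' : 0 ≤ a' ∧ a' ≤ 1) (hp : 0 ≤ p ∧ p ≤ 1) :
    |a * p - a' * p'| ≤ |a - a'| + |p - p'| := by
  have e : a * p - a' * p' = (a - a') * p + a' * (p - p') := by ring
  rw [e]
  refine (abs_add_le _ _).trans ?_
  rw [abs_mul, abs_mul, abs_of_nonneg hp.1, abs_of_nonneg ha'.1]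
  have h1 := mul_le_of_le_one_right (abs_nonneg (a - a')) hp.2
  have h2 := mul_le_of_le_one_left (abs_nonneg (p - p')) ha'.2
  linarith

theorem pow_mem01 {a : ℝ} (ha : 0 ≤ a ∧ a ≤ 1) (n : ℕ) : 0 ≤ a ^ n ∧ a ^ n ≤ 1 :=
  ⟨pow_nonneg ha.1 n, pow_le_one₀ ha.1 ha.2⟩

theorem pow_diff_le {a a' : ℝ} (ha : 0 ≤ a ∧ a ≤ 1) (ha' : 0 ≤ a' ∧ a' ≤ 1) (n : ℕ) :
    |a ^ n - a' ^ n| ≤ n * |a - a'| := by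
  induction n with
  | zero => simp
  | succ n ih =>
    rw [pow_succ, pow_succ]
    refine (mul_diff_le (pow_mem01 ha' n) ha).trans ?_
    push_cast
    linarith

theorem prod_mem01 {ι : Type*} (s : Finset ι) (f : ι → ℝ) (hf : ∀ i, 0 ≤ f i ∧ f i ≤ 1) :
    0 ≤ ∏ i ∈ s, f i ∧ ∏ i ∈ s, f i ≤ 1 :=
  ⟨Finset.prod_nonneg fun i _ => (hf i).1,
    Finset.prod_le_one (fun i _ => (hf i).1) fun i _ => (hf i).2⟩

theorem prod_diff_le {ι : Type*} (s : Finset ι) (f g : ι → ℝ)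
    (hf : ∀ i, 0 ≤ f i ∧ f i ≤ 1) (hg : ∀ i, 0 ≤ g i ∧ g i ≤ 1) :
    |∏ i ∈ s, f i - ∏ i ∈ s, g i| ≤ ∑ i ∈ s, |f i - g i| := by
  classical
  induction s using Finset.induction_on with
  | empty => simp
  | insert a s ha ih =>
    rw [Finset.prod_insert ha, Finset.prod_insert ha, Finset.sum_insert ha]
    refine (mul_diff_le (hg a) (prod_mem01 s f hf)).trans ?_
    linarith

theorem prod_diff_le_card {M : ℕ} (s : Finset (Fin M)) (f g : Fin M → ℝ)
    (hf : ∀ i, 0 ≤ f i ∧ f i ≤ 1) (hg : ∀ i, 0 ≤ g i ∧ g i ≤ 1) (B : ℝ) (hB : 0 ≤ B)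
    (h : ∀ i, |f i - g i| ≤ B) :
    |∏ i ∈ s, f i - ∏ i ∈ s, g i| ≤ M * B := by
  refine (prod_diff_le s f g hf hg).trans ?_
  refine (Finset.sum_le_card_nsmul s _ B fun i _ => h i).trans ?_
  rw [nsmul_eq_mul]
  have : s.card ≤ M := by simpa using Finset.card_le_univ s
  have : (s.card : ℝ) ≤ M := by exact_mod_cast this
  exact mul_le_mul_of_nonneg_right this hB

/-- `l̂` is Lipschitz with constant `K₂ = 4Mλ(maxⱼ dⱼ)/(minⱼ γⱼ) + 3μ(maxⱼ Cⱼ)`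
with respect to the weighted sup norm `‖u‖ = sup_{j,k} |u_k^{(j)}|/(k+1)`. -/
theorem meanFieldLhat_lipschitz
    (M : ℕ) (hM : 1 ≤ M) (lam mu : ℝ) (hlam : 0 < lam) (hmu : 0 < mu)
    (γ C : Fin M → ℝ) (d : Fin M → ℕ)
    (hγ : ∀ j, 0 < γ j ∧ γ j ≤ 1) (hC : ∀ j, 0 < C j) (hd : ∀ j, 1 ≤ d j)
    (u w : Fin M → ℕ → ℝ) (b : ℝ)
    (hb : ∀ j k, |u j k - w j k| / (k + 1) ≤ b) :
    ∀ j k, |meanFieldLhat lam mu γ C d u j k - meanFieldLhat lam mu γ C d w j k| / (k + 1) ≤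
      (4 * M * lam * (⨆ j, (d j : ℝ)) / (⨅ j, γ j) + 3 * mu * (⨆ j, C j)) * b := by
  intro j k
  set D := ⨆ j, (d j : ℝ) with hD
  set G := ⨅ j, γ j with hG
  set S := ⨆ j, C j with hS
  have hDj : ∀ i, (d i : ℝ) ≤ D := fun i => le_ciSup (f := fun j => (d j : ℝ)) (Set.finite_range _).bddAbove i
  have hSj : ∀ i, C i ≤ S := fun i => le_ciSup (Set.finite_range _).bddAbove i
  have hGj : ∀ i, G ≤ γ i := fun i => ciInf_le (Set.finite_range _).bddBelow i
  haveI : Nonempty (Fin M) := ⟨j⟩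
  have hG0 : 0 < G := by
    obtain ⟨i, hi⟩ := exists_eq_ciInf_of_finite (f := γ)
    rw [hG, ← hi]
    exact (hγ i).1
  have hD0 : 0 ≤ D := (Nat.cast_nonneg _).trans (hDj j)
  have hS0 : 0 < S := (hC j).trans_le (hSj j)
  have hb0 : 0 ≤ b := le_trans (by positivity) (hb j 0)
  have hM1 : (1 : ℝ) ≤ M := by exact_mod_cast hM
  have hb' : ∀ i (n : ℕ), |u i n - w i n| ≤ b * (n + 1) := fun i n =>
    (div_le_iff₀ (by positivity)).1 (hb i n)
  rw [div_le_iff₀ (by positivity)]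
  cases k with
  | zero =>
    simp only [meanFieldLhat, sub_self, abs_zero]
    positivity
  | succ k =>
    simp only [meanFieldLhat]
    push_cast
    set B : ℝ := b * (k + 2) with hB
    have hk : (0 : ℝ) ≤ k := Nat.cast_nonneg k
    have hB0 : 0 ≤ B := by positivity
    have h0 : ∀ i, |trunc (u i k) - trunc (w i k)| ≤ B := fun i =>
      (trunc_sub_le _ _).trans ((hb' i k).trans (by rw [hB]; nlinarith))
    have h1 : ∀ i, |trunc (u i (k + 1)) - trunc (w i (k + 1))| ≤ B := fun i =>
      (trunc_sub_le _ _).trans ((hb' i (k + 1)).trans (by rw [hB]; push_cast; nlinarith))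
    have h2 : ∀ i, |trunc (u i (k + 2)) - trunc (w i (k + 2))| ≤ 2 * B := fun i =>
      (trunc_sub_le _ _).trans ((hb' i (k + 2)).trans (by rw [hB]; push_cast; nlinarith))
    have pw : ∀ i (x y : ℝ), |trunc x - trunc y| ≤ B →
        |trunc x ^ d i - trunc y ^ d i| ≤ D * B := fun i x y h =>
      (pow_diff_le (trunc_mem x) (trunc_mem y) _).trans
        (mul_le_mul (hDj i) h (abs_nonneg _) hD0)
    have hDB : 0 ≤ D * B := mul_nonneg hD0 hB0
    have m01 : ∀ x y : ℝ, 0 ≤ max 0 (trunc x ^ d j - trunc y ^ d j) ∧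
        max 0 (trunc x ^ d j - trunc y ^ d j) ≤ 1 := fun x y =>
      ⟨le_max_left _ _, max_le zero_le_one (by
        linarith [(pow_mem01 (trunc_mem x) (d j)).2, (pow_mem01 (trunc_mem y) (d j)).1])⟩
    have t01 : ∀ (v : Fin M → ℕ → ℝ) n i, 0 ≤ trunc (v i n) ^ d i ∧ trunc (v i n) ^ d i ≤ 1 :=
      fun v n i => pow_mem01 (trunc_mem _) _
    have q1 := prod_diff_le_card (univ.filter (fun i => i < j)) _ _ (t01 u k) (t01 w k) (D * B) hDB
      (fun i => pw i _ _ (h0 i))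
    have q2 := prod_diff_le_card (univ.filter (fun i => j < i)) _ _ (t01 u (k+1)) (t01 w (k+1))
      (D * B) hDB (fun i => pw i _ _ (h1 i))
    have a1 := prod_mem01 (univ.filter (fun i => i < j)) _ (t01 u k)
    have a1w := prod_mem01 (univ.filter (fun i => i < j)) _ (t01 w k)
    have a2 := prod_mem01 (univ.filter (fun i => j < i)) _ (t01 u (k+1))
    have q3 : |max 0 (trunc (u j k) ^ d j - trunc (u j (k+1)) ^ d j) -
        max 0 (trunc (w j k) ^ d j - trunc (w j (k+1)) ^ d j)| ≤ 2 * (D * B) := by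
      refine (max_zero_sub_le _ _).trans ?_
      have e1 := abs_le.1 (pw j _ _ (h0 j))
      have e2 := abs_le.1 (pw j _ _ (h1 j))
      rw [abs_le]
      constructor <;> linarith [e1.1, e1.2, e2.1, e2.2]
    have q4 : |max 0 (trunc (u j (k+1)) - trunc (u j (k+2))) -
        max 0 (trunc (w j (k+1)) - trunc (w j (k+2)))| ≤ 3 * B := by
      refine (max_zero_sub_le _ _).trans ?_
      have e1 := abs_le.1 (h1 j)
      have e2 := abs_le.1 (h2 j)
      rw [abs_le]
      constructor <;> linarith [e1.1, e1.2, e2.1, e2.2]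
    have b0 := m01 (u j k) (u j (k+1))
    have b0w := m01 (w j k) (w j (k+1))
    generalize (∏ i ∈ univ.filter (fun i => i < j), (trunc (u i k)) ^ (d i)) = P at *
    generalize (∏ i ∈ univ.filter (fun i => i < j), (trunc (w i k)) ^ (d i)) = P' at *
    generalize (∏ i ∈ univ.filter (fun i => j < i), (trunc (u i (k+1))) ^ (d i)) = Q at *
    generalize (∏ i ∈ univ.filter (fun i => j < i), (trunc (w i (k+1))) ^ (d i)) = Q' at *
    generalize max 0 (trunc (u j k) ^ d j - trunc (u j (k+1)) ^ d j) = A at *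
    generalize max 0 (trunc (w j k) ^ d j - trunc (w j (k+1)) ^ d j) = A' at *
    generalize max 0 (trunc (u j (k+1)) - trunc (u j (k+2))) = E at *
    generalize max 0 (trunc (w j (k+1)) - trunc (w j (k+2))) = E' at *
    have r1 : |A * P * Q - A' * P' * Q'| ≤ 4 * M * (D * B) := by
      have s1 := mul_diff_le (a := A * P) (a' := A' * P') (p := Q) (p' := Q')
        ⟨mul_nonneg b0w.1 a1w.1, mul_le_one₀ b0w.2 a1w.1 a1w.2⟩ a2
      have s2 := mul_diff_le (a := A) (p' := P') b0w a1
      nlinarith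
    have hlg : lam / γ j ≤ lam / G := div_le_div_of_nonneg_left hlam.le hG0 (hGj j)
    have hlg0 : 0 ≤ lam / γ j := div_nonneg hlam.le (hγ j).1.le
    have hmc0 : 0 ≤ mu * C j := mul_nonneg hmu.le (hC j).le
    have hmc : mu * C j ≤ mu * S := mul_le_mul_of_nonneg_left (hSj j) hmu.le
    have e : lam / γ j * A * P * Q - mu * C j * E - (lam / γ j * A' * P' * Q' - mu * C j * E')
        = lam / γ j * (A * P * Q - A' * P' * Q') - mu * C j * (E - E') := by ring
    rw [e]
    refine (abs_sub _ _).trans ?_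
    rw [abs_mul, abs_mul, abs_of_nonneg hlg0, abs_of_nonneg hmc0]
    have f1 : lam / γ j * |A * P * Q - A' * P' * Q'| ≤ lam / G * (4 * M * (D * B)) :=
      mul_le_mul hlg r1 (abs_nonneg _) (hlg0.trans hlg)
    have f2 : mu * C j * |E - E'| ≤ mu * S * (3 * B) :=
      mul_le_mul hmc q4 (abs_nonneg _) (hmc0.trans hmc)
    refine (add_le_add f1 f2).trans (le_of_eq ?_)
    rw [hB]
    ring
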